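/- For every 0 ≤ t < T, x ∈ ℝ and w > 0, the derivative of the Black–Scholes call price with respect to the squared volatility satisfies ∂_w [BS(t,x,√w)] = ((T − t)/2) · (∂²_{xx} − ∂_x) BS(t,x,√w). In other words, ∂_{σ²} BS(t,x,σ) = ((T−t)/2)(∂²_x − ∂_x) BS(t,x,σ). -/

import Mathlib

open Real MeasureTheory

/-- Standard normal cumulative distribution function. -/
noncomputable def stdNormalCDF (x : ℝ) : ℝ :=
  ∫ t in Set.Iic x, (Real.sqrt (2 * Real.pi))⁻¹ * Real.exp (-t ^ 2 / 2)

/-- d₊ in the Black–Scholes formula. -/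
noncomputable def dPlus (T K r t x y : ℝ) : ℝ :=
  (x - Real.log K + (r + y ^ 2 / 2) * (T - t)) / (y * Real.sqrt (T - t))

/-- d₋ in the Black–Scholes formula. -/
noncomputable def dMinus (T K r t x y : ℝ) : ℝ :=
  (x - Real.log K + (r - y ^ 2 / 2) * (T - t)) / (y * Real.sqrt (T - t))

/-- Black–Scholes call price with maturity `T`, strike `K`, interest rate `r`,
current time `t`, log spot price `x` and volatility `y`. -/
noncomputable def BS (T K r t x y : ℝ) : ℝ :=
  Real.exp x * stdNormalCDF (dPlus T K r t x y)
    - K * Real.exp (-r * (T - t)) * stdNormalCDF (dMinus T K r t x y)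

/-- The operator Γ := ∂²ₓₓ − ∂ₓ acting on functions of the log spot price. -/
noncomputable def GammaOp (f : ℝ → ℝ) : ℝ → ℝ :=
  fun x => deriv (deriv f) x - deriv f x

/-!
Write `τ = T − t`, `φ = Φ'` and `σ = √w`. Since `d₋ = d₊ − σ√τ` and `d₊ · σ√τ` is the logarithm of
`e^x / (K e^{-rτ})` plus `σ²τ / 2`, one has `e^x φ(d₊) = K e^{-rτ} φ(d₋)`. Hence, in differentiating
`e^x Φ(d₊) − K e^{-rτ} Φ(d₋)`, the derivatives of `d₊` and `d₋` only enter through those of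
`d₊ − d₋ = σ√τ`. This gives `∂ₓ BS = e^x Φ(d₊)`, so that `(∂²ₓ − ∂ₓ) BS = e^x φ(d₊) / (σ√τ)`, and
`∂_σ BS = e^x φ(d₊) √τ = στ (∂²ₓ − ∂ₓ) BS`; finally `∂_{σ²} = (2σ)⁻¹ ∂_σ`.
-/

section

open ProbabilityTheory

local notation "φ" => gaussianPDFReal 0 1

lemma hasDerivAt_integral_Iic {E : Type*} [NormedAddCommGroup E] [NormedSpace ℝ E]
    [CompleteSpace E] {f : ℝ → E} {x : ℝ} (hf : Integrable f) (hx : ContinuousAt f x) :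
    HasDerivAt (fun y => ∫ t in Set.Iic y, f t) (f x) x := by
  have h_split (y : ℝ) : ∫ t in Set.Iic y, f t = (∫ t in Set.Iic x, f t) + ∫ t in x..y, f t := by
    rw [← intervalIntegral.integral_Iic_sub_Iic hf.integrableOn hf.integrableOn, add_sub_cancel]
  have h_right : HasDerivAt (fun y => ∫ t in x..y, f t) (f x) x :=
    intervalIntegral.integral_hasDerivAt_right hf.intervalIntegrable
      hf.aestronglyMeasurable.stronglyMeasurableAtFilter hx
  exact (h_right.const_add (∫ t in Set.Iic x, f t)).congr_of_eventuallyEq (.of_forall h_split)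

lemma stdNormalCDF_eq_integral_gaussianPDFReal (x : ℝ) :
    stdNormalCDF x = ∫ t in Set.Iic x, φ t := by
  simp only [stdNormalCDF, gaussianPDFReal, NNReal.coe_one, mul_one, sub_zero]

lemma continuous_gaussianPDFReal (μ : ℝ) (v : NNReal) : Continuous (gaussianPDFReal μ v) := by
  unfold gaussianPDFReal
  fun_prop

lemma hasDerivAt_stdNormalCDF (x : ℝ) : HasDerivAt stdNormalCDF (φ x) x := by
  simpa only [← stdNormalCDF_eq_integral_gaussianPDFReal] using
    hasDerivAt_integral_Iic (integrable_gaussianPDFReal 0 1)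
      (continuous_gaussianPDFReal 0 1).continuousAt

lemma gaussianPDFReal_sub_eq_exp_mul (μ : ℝ) (v : NNReal) (x a : ℝ) :
    gaussianPDFReal μ v (x - a)
      = exp (((x - μ) * a - a ^ 2 / 2) / v) * gaussianPDFReal μ v x := by
  rw [gaussianPDFReal, gaussianPDFReal, mul_left_comm, ← exp_add]
  congr 2
  ring

lemma hasDerivAt_mul_stdNormalCDF_sub {S p m : ℝ → ℝ} {S' p' m' k u : ℝ}
    (hS : HasDerivAt S S' u) (hp : HasDerivAt p p' u) (hm : HasDerivAt m m' u)
    (h_balance : S u * φ (p u) = k * φ (m u)) :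
    HasDerivAt (fun v => S v * stdNormalCDF (p v) - k * stdNormalCDF (m v))
      (S' * stdNormalCDF (p u) + S u * φ (p u) * (p' - m')) u := by
  have hΦp := (hasDerivAt_stdNormalCDF (p u)).comp u hp
  have hΦm := (hasDerivAt_stdNormalCDF (m u)).comp u hm
  refine ((hS.mul hΦp).sub (hΦm.const_mul k)).congr_deriv ?_
  simp only [Function.comp_apply]
  linear_combination m' * h_balance

lemma dMinus_eq_dPlus_sub (T K r t x y : ℝ) :
    dMinus T K r t x y = dPlus T K r t x y - y * √(T - t) := by
  have h_gap : y * √(T - t) = y ^ 2 * (T - t) / (y * √(T - t)) := by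
    rw [mul_div_mul_comm, div_sqrt, sq, mul_self_div_self]
  rw [h_gap, dMinus, dPlus, ← sub_div]
  ring

lemma hasDerivAt_dPlus_logSpot (T K r t x y : ℝ) :
    HasDerivAt (fun x' => dPlus T K r t x' y) (y * √(T - t))⁻¹ x := by
  simpa only [dPlus, id_eq, one_div] using
    (((hasDerivAt_id x).sub_const (log K)).add_const ((r + y ^ 2 / 2) * (T - t))).div_const
      (y * √(T - t))

lemma hasDerivAt_dMinus_logSpot (T K r t x y : ℝ) :
    HasDerivAt (fun x' => dMinus T K r t x' y) (y * √(T - t))⁻¹ x := by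
  simpa only [dMinus_eq_dPlus_sub] using
    (hasDerivAt_dPlus_logSpot T K r t x y).sub_const (y * √(T - t))

lemma differentiableAt_dPlus_vol {T t y : ℝ} (K r x : ℝ) (htT : t < T) (hy : y ≠ 0) :
    DifferentiableAt ℝ (fun y' => dPlus T K r t x y') y := by
  have hτ : √(T - t) ≠ 0 := sqrt_ne_zero'.2 (sub_pos.2 htT)
  unfold dPlus
  fun_prop (disch := exact mul_ne_zero hy hτ)

variable {T K t y : ℝ} (r x : ℝ)

lemma exp_mul_gaussianPDFReal_dPlus (hK : 0 < K) (htT : t < T) (hy : y ≠ 0) :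
    exp x * φ (dPlus T K r t x y) = K * exp (-r * (T - t)) * φ (dMinus T K r t x y) := by
  have hτ : 0 < T - t := sub_pos.2 htT
  have h_dPlus : dPlus T K r t x y * (y * √(T - t)) = x - log K + (r + y ^ 2 / 2) * (T - t) :=
    div_mul_cancel₀ _ (mul_ne_zero hy (sqrt_ne_zero'.2 hτ))
  have h_exponent : dPlus T K r t x y * (y * √(T - t)) - (y * √(T - t)) ^ 2 / 2
      = x - log K - -r * (T - t) := by
    rw [h_dPlus, mul_pow, sq_sqrt hτ.le]
    ring
  rw [dMinus_eq_dPlus_sub, gaussianPDFReal_sub_eq_exp_mul, sub_zero, NNReal.coe_one, div_one,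
    h_exponent, exp_sub, exp_sub, exp_log hK]
  field_simp

lemma hasDerivAt_BS_logSpot (hK : 0 < K) (htT : t < T) (hy : y ≠ 0) :
    HasDerivAt (fun x' => BS T K r t x' y) (exp x * stdNormalCDF (dPlus T K r t x y)) x := by
  simpa only [BS, sub_self, mul_zero, add_zero] using
    hasDerivAt_mul_stdNormalCDF_sub (hasDerivAt_exp x) (hasDerivAt_dPlus_logSpot T K r t x y)
      (hasDerivAt_dMinus_logSpot T K r t x y) (exp_mul_gaussianPDFReal_dPlus r x hK htT hy)

lemma GammaOp_BS (hK : 0 < K) (htT : t < T) (hy : y ≠ 0) :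
    GammaOp (fun x' => BS T K r t x' y) x
      = exp x * φ (dPlus T K r t x y) / (y * √(T - t)) := by
  have h_deriv : deriv (fun x' => BS T K r t x' y)
      = fun x' => exp x' * stdNormalCDF (dPlus T K r t x' y) :=
    funext fun x' => (hasDerivAt_BS_logSpot r x' hK htT hy).deriv
  have h_deriv₂ := (hasDerivAt_exp x).fun_mul
    ((hasDerivAt_stdNormalCDF _).comp x (hasDerivAt_dPlus_logSpot T K r t x y))
  simp only [Function.comp_apply] at h_deriv₂
  rw [GammaOp, h_deriv, h_deriv₂.deriv]
  ring

lemma hasDerivAt_BS_vol (hK : 0 < K) (htT : t < T) (hy : y ≠ 0) :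
    HasDerivAt (fun y' => BS T K r t x y') (exp x * φ (dPlus T K r t x y) * √(T - t)) y := by
  have h_dPlus := (differentiableAt_dPlus_vol K r x htT hy).hasDerivAt
  have h_dMinus := h_dPlus.fun_sub (hasDerivAt_mul_const (x := y) √(T - t))
  simp only [← dMinus_eq_dPlus_sub] at h_dMinus
  simpa only [BS, zero_mul, zero_add, sub_sub_cancel] using
    hasDerivAt_mul_stdNormalCDF_sub (hasDerivAt_const y (exp x)) h_dPlus h_dMinus
      (exp_mul_gaussianPDFReal_dPlus r x hK htT hy)

lemma hasDerivAt_BS_vol_eq_mul_GammaOp (hK : 0 < K) (htT : t < T) (hy : y ≠ 0) :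
    HasDerivAt (fun y' => BS T K r t x y')
      (y * (T - t) * GammaOp (fun x' => BS T K r t x' y) x) y := by
  have hτ : 0 < T - t := sub_pos.2 htT
  refine (hasDerivAt_BS_vol r x hK htT hy).congr_deriv ?_
  rw [GammaOp_BS r x hK htT hy]
  have h_sqrt : √(T - t) ≠ 0 := sqrt_ne_zero'.2 hτ
  field_simp
  rw [sq_sqrt hτ.le]

end

theorem dsigma_sq_bs_general (T K r : ℝ) (hK : 0 < K) (t x w : ℝ) (htT : t < T) (hw : 0 < w) :
    HasDerivAt (fun w' => BS T K r t x √w')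
      ((T - t) / 2 * GammaOp (fun x' => BS T K r t x' √w) x) w := by
  have hσ : √w ≠ 0 := sqrt_ne_zero'.2 hw
  refine ((hasDerivAt_BS_vol_eq_mul_GammaOp r x hK htT hσ).comp w
    (hasDerivAt_sqrt hw.ne')).congr_deriv ?_
  field_simp

/-- Derivative of the Black–Scholes price with respect to the squared
volatility: ∂_{σ²} BS(t,x,σ) = ((T−t)/2)(∂²ₓ − ∂ₓ) BS(t,x,σ). -/
theorem dsigma_sq_bs (T K r : ℝ) (hT : 0 < T) (hK : 0 < K)
    (t x w : ℝ) (ht0 : 0 ≤ t) (htT : t < T) (hw : 0 < w) :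
    deriv (fun w' => BS T K r t x (Real.sqrt w')) w
      = ((T - t) / 2) * GammaOp (fun x' => BS T K r t x' (Real.sqrt w)) x :=
  (dsigma_sq_bs_general T K r hK t x w htT hw).deriv
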